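/- Let Ω ⊆ ℂ be open, let m ≥ 0 and μ > 0, and set λ := √(μ + m²). Define the Wirtinger derivatives ∂_z g(z) := (1/2)(∂₁g(z) − i·∂₂g(z)) and ∂_{z̄} g(z) := (1/2)(∂₁g(z) + i·∂₂g(z)), where ∂₁g(z) and ∂₂g(z) are the directional derivatives of g at z along 1 and along i, respectively. Let u : ℂ → ℂ be real-differentiable on Ω such that the function z ↦ ∂_{z̄} u(z) is real-differentiable on Ω and 4·∂_z(∂_{z̄} u)(z) = −μ·u(z) for all z ∈ Ω. Define v(z) := (−2i/(λ + m))·∂_{z̄} u(z). Then λ > m, and on Ω both equations −2i·∂_z v = (λ − m)·u and −2i·∂_{z̄} u = (λ + m)·v hold. -/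

import Mathlib

open Complex

/-- Wirtinger derivative ∂_z g = (1/2)(∂₁g − i ∂₂g), where ∂₁, ∂₂ are the directional
derivatives along `1` and along `i`. -/
noncomputable def wirtingerZ (g : ℂ → ℂ) (z : ℂ) : ℂ :=
  (1/2) * (lineDeriv ℝ g z 1 - Complex.I * lineDeriv ℝ g z Complex.I)

/-- Wirtinger derivative ∂_{z̄} g = (1/2)(∂₁g + i ∂₂g), where ∂₁, ∂₂ are the directional
derivatives along `1` and along `i`. -/
noncomputable def wirtingerZbar (g : ℂ → ℂ) (z : ℂ) : ℂ :=
  (1/2) * (lineDeriv ℝ g z 1 + Complex.I * lineDeriv ℝ g z Complex.I)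

theorem lineDeriv_const_mul {𝕜 𝔸 E : Type*} [NontriviallyNormedField 𝕜] [NormedDivisionRing 𝔸]
    [NormedAlgebra 𝕜 𝔸] [AddCommGroup E] [Module 𝕜 E] (c : 𝔸) (g : E → 𝔸) (x d : E) :
    lineDeriv 𝕜 (fun y => c * g y) x d = c * lineDeriv 𝕜 g x d :=
  deriv_const_mul_field c

theorem wirtingerZ_const_mul (c : ℂ) (g : ℂ → ℂ) (z : ℂ) :
    wirtingerZ (fun w => c * g w) z = c * wirtingerZ g z := by
  simp only [wirtingerZ, lineDeriv_const_mul]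
  ring

/-- The pair `(u, v)` solves the first-order Dirac system with mass `m` and eigenvalue `lam` at the
point `z`. Differentiability is part of the notion, since `lineDeriv` is `0` where the directional
derivative does not exist. -/
structure IsDiracSolutionAt (m lam : ℂ) (u v : ℂ → ℂ) (z : ℂ) : Prop where
  differentiableAt_fst : DifferentiableAt ℝ u z
  differentiableAt_snd : DifferentiableAt ℝ v z
  wirtingerZ_snd : -2 * I * wirtingerZ v z = (lam - m) * u z
  wirtingerZbar_fst : -2 * I * wirtingerZbar u z = (lam + m) * v z

/-- The second component that the equation `-2i ∂_{z̄}u = (lam + m) v` of the Dirac system forces on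
a pair with first component `u`; it is meaningful for `lam + m ≠ 0`. -/
noncomputable def diracPartner (m lam : ℂ) (u : ℂ → ℂ) (z : ℂ) : ℂ :=
  -2 * I / (lam + m) * wirtingerZbar u z

section DiracPartner

variable {m lam μ : ℂ} {u : ℂ → ℂ} {z : ℂ}

theorem wirtingerZ_diracPartner :
    wirtingerZ (diracPartner m lam u) z =
      -2 * I / (lam + m) * wirtingerZ (wirtingerZbar u) z :=
  wirtingerZ_const_mul _ _ _

theorem neg_two_I_mul_wirtingerZ_diracPartner (hne : lam + m ≠ 0) (hsq : lam ^ 2 = μ + m ^ 2)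
    (heq : 4 * wirtingerZ (wirtingerZbar u) z = -μ * u z) :
    -2 * I * wirtingerZ (diracPartner m lam u) z = (lam - m) * u z := by
  have hfactor : μ = (lam - m) * (lam + m) := by linear_combination -hsq
  calc -2 * I * wirtingerZ (diracPartner m lam u) z
      = 4 * I ^ 2 * wirtingerZ (wirtingerZbar u) z / (lam + m) := by
        rw [wirtingerZ_diracPartner]
        ring
    _ = -(4 * wirtingerZ (wirtingerZbar u) z) / (lam + m) := by
        rw [I_sq]
        ring
    _ = (lam - m) * (lam + m) * u z / (lam + m) := by
        rw [heq, hfactor]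
        ring
    _ = (lam - m) * u z := by field_simp

theorem neg_two_I_mul_wirtingerZbar_eq_diracPartner (hne : lam + m ≠ 0) :
    -2 * I * wirtingerZbar u z = (lam + m) * diracPartner m lam u z := by
  rw [diracPartner]
  field_simp

theorem isDiracSolutionAt_diracPartner (hne : lam + m ≠ 0) (hsq : lam ^ 2 = μ + m ^ 2)
    (hu : DifferentiableAt ℝ u z) (hu' : DifferentiableAt ℝ (wirtingerZbar u) z)
    (heq : 4 * wirtingerZ (wirtingerZbar u) z = -μ * u z) :
    IsDiracSolutionAt m lam u (diracPartner m lam u) z where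
  differentiableAt_fst := hu
  differentiableAt_snd := hu'.const_mul _
  wirtingerZ_snd := neg_two_I_mul_wirtingerZ_diracPartner hne hsq heq
  wirtingerZbar_fst := neg_two_I_mul_wirtingerZbar_eq_diracPartner hne

end DiracPartner

theorem stmt_15_general {Ω : Set ℂ} {m μ : ℝ} (hμ : 0 < μ) {lam : ℝ}
    (hlam : lam = Real.sqrt (μ + m ^ 2)) {u : ℂ → ℂ}
    (hu : ∀ z ∈ Ω, DifferentiableAt ℝ u z)
    (hu' : ∀ z ∈ Ω, DifferentiableAt ℝ (wirtingerZbar u) z)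
    (heq : ∀ z ∈ Ω, 4 * wirtingerZ (wirtingerZbar u) z = -(μ : ℂ) * u z) :
    |m| < lam ∧ ∀ z ∈ Ω, IsDiracSolutionAt m lam u (diracPartner m lam u) z := by
  have habs : |m| < lam := by
    rw [hlam, Real.lt_sqrt (abs_nonneg m), sq_abs]
    exact lt_add_of_pos_left _ hμ
  have hne : lam + m ≠ 0 := by linarith [(abs_lt.mp habs).1]
  have hsq : lam ^ 2 = μ + m ^ 2 := by rw [hlam, Real.sq_sqrt (by positivity)]
  exact ⟨habs, fun z hz => isDiracSolutionAt_diracPartner (mod_cast hne) (mod_cast hsq)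
    (hu z hz) (hu' z hz) (heq z hz)⟩

/-- Converse direction of the reduction in Section 3.1: from a solution `u` of
`4∂_z∂_{z̄}u = −μu` with `μ > 0`, setting `λ = √(μ+m²)` and
`v = (−2i/(λ+m))∂_{z̄}u`, one has `λ > m` and `(u, v)` solves the first-order Dirac system. -/
theorem stmt_15 (Ω : Set ℂ) (hΩ : IsOpen Ω) (m μ : ℝ) (hm : 0 ≤ m) (hμ : 0 < μ)
    (lam : ℝ) (hlam : lam = Real.sqrt (μ + m^2))
    (u : ℂ → ℂ)
    (hu : ∀ z ∈ Ω, DifferentiableAt ℝ u z)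
    (hu' : ∀ z ∈ Ω, DifferentiableAt ℝ (fun w => wirtingerZbar u w) z)
    (heq : ∀ z ∈ Ω, 4 * wirtingerZ (fun w => wirtingerZbar u w) z = -(μ : ℂ) * u z)
    (v : ℂ → ℂ)
    (hv : ∀ z : ℂ, v z = (-2 * Complex.I / (((lam : ℝ) : ℂ) + (m : ℂ))) * wirtingerZbar u z) :
    lam > m ∧
      (∀ z ∈ Ω, -2 * Complex.I * wirtingerZ v z = ((lam - m : ℝ) : ℂ) * u z) ∧
      (∀ z ∈ Ω, -2 * Complex.I * wirtingerZbar u z = ((lam + m : ℝ) : ℂ) * v z) := by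
  obtain rfl : v = diracPartner m lam u := funext hv
  obtain ⟨habs, hdirac⟩ := stmt_15_general hμ hlam hu hu' heq
  exact ⟨(abs_lt.mp habs).2, fun z hz => mod_cast (hdirac z hz).wirtingerZ_snd,
    fun z hz => mod_cast (hdirac z hz).wirtingerZbar_fst⟩
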